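/- Let k ≥ 2 and t ≥ 2 be fixed integers. Then there exists n₀ such that for all integers n ≥ n₀, the star-critical Ramsey number satisfies r₊(K_{k+1}, K₁ + nK_t) = (k−1)·t·n + t. -/

import Mathlib

open SimpleGraph

/-- `containsCopy F G` : the graph `F` contains a copy of the graph `G` (as a subgraph). -/
def containsCopy {V W : Type*} (F : SimpleGraph V) (G : SimpleGraph W) : Prop :=
  ∃ f : G →g F, Function.Injective f

/-- `arrows N G H` : every red/blue coloring of the edges of `K_N` (given by the graph `R` of
red edges, whose complement is the graph of blue edges) contains a red copy of `G` or a
blue copy of `H`. -/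
def arrows {V W : Type*} (N : ℕ) (G : SimpleGraph V) (H : SimpleGraph W) : Prop :=
  ∀ R : SimpleGraph (Fin N), containsCopy R G ∨ containsCopy Rᶜ H

/-- The Ramsey number `R(G, H)`. -/
noncomputable def ramseyNumber {V W : Type*} (G : SimpleGraph V) (H : SimpleGraph W) : ℕ :=
  sInf { N : ℕ | 0 < N ∧ arrows N G H }

/-- The generalized fan `K₁ + nK_t` : the join of a single vertex (`none`) with `n` disjoint
copies of `K_t`. -/
def genFan (n t : ℕ) : SimpleGraph (Option (Fin n × Fin t)) :=
  SimpleGraph.fromRel (fun a b =>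
    a = none ∨ ∃ p q : Fin n × Fin t, a = some p ∧ b = some q ∧ p.1 = q.1)

/-- A graph `G` is edge-critical if it has an edge `e` with `χ(G - e) = χ(G) - 1`. -/
def EdgeCritical {V : Type*} (G : SimpleGraph V) : Prop :=
  ∃ u v : V, G.Adj u v ∧ (G.deleteEdges {s(u, v)}).chromaticNumber + 1 = G.chromaticNumber

/-- `K_m ⊔ K_{1,ℓ}` : the complete graph on the `m` vertices `some i`, together with one new
vertex `none` joined to exactly the `ℓ` vertices `some i` with `i < ℓ` (for `ℓ ≤ m`). -/
def KstarK (m ℓ : ℕ) : SimpleGraph (Option (Fin m)) :=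
  SimpleGraph.fromRel (fun a b =>
    ((∃ i : Fin m, a = some i) ∧ ∃ j : Fin m, b = some j) ∨
      (a = none ∧ ∃ j : Fin m, b = some j ∧ (j : ℕ) < ℓ))

/-- `starArrows m ℓ G H` : every red/blue coloring of the edges of `K_m ⊔ K_{1,ℓ}` (the red
edges forming a subgraph `R`, the blue edges the remaining edges) contains a red copy of `G`
or a blue copy of `H`. -/
def starArrows {V W : Type*} (m ℓ : ℕ) (G : SimpleGraph V) (H : SimpleGraph W) : Prop :=
  ∀ R : SimpleGraph (Option (Fin m)), R ≤ KstarK m ℓ →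
    containsCopy R G ∨ containsCopy (KstarK m ℓ \ R) H

/-- The star-critical Ramsey number `r₊(G, H)`. -/
noncomputable def starRamsey {V W : Type*} (G : SimpleGraph V) (H : SimpleGraph W) : ℕ :=
  sInf { ℓ : ℕ | starArrows (ramseyNumber G H - 1) ℓ G H }

/-- The chromatic number of `G` as a natural number. -/
noncomputable def chromNum {V : Type*} (G : SimpleGraph V) : ℕ := G.chromaticNumber.toNat

/-- `s(G)` : the minimum size of a color class over all proper `χ(G)`-colorings of `G`. -/
noncomputable def minClassSize {V : Type*} (G : SimpleGraph V) : ℕ :=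
  sInf { m : ℕ | ∃ C : G.Coloring (Fin (chromNum G)), ∃ i : Fin (chromNum G),
    m = {v | C v = i}.ncard }

/-- `τ(G)` : the minimum, over all proper `χ(G)`-colorings of `G` having a color class `U_j`
of size `s(G)`, over all vertices `v ∈ U_j` and all other color classes `U_i`, of the number
of neighbors of `v` in `U_i`. -/
noncomputable def tauNum {V : Type*} (G : SimpleGraph V) : ℕ :=
  sInf { m : ℕ | ∃ C : G.Coloring (Fin (chromNum G)), ∃ j : Fin (chromNum G),
    {v | C v = j}.ncard = minClassSize G ∧
    ∃ v, C v = j ∧ ∃ i : Fin (chromNum G), i ≠ j ∧ m = {u | C u = i ∧ G.Adj v u}.ncard }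

section helpers

theorem ramsey_fin (a b : ℕ) : ∃ M : ℕ, ∀ {V : Type} (R : SimpleGraph V) (S : Finset V),
    M ≤ S.card → (∃ T ⊆ S, R.IsNClique a T) ∨ (∃ T ⊆ S, Rᶜ.IsNClique b T) := by
  classical
  induction a generalizing b with
  | zero => exact ⟨0, fun R S _ => Or.inl ⟨∅, by simp, by simp [isNClique_iff]⟩⟩
  | succ a iha =>
    induction b with
    | zero => exact ⟨0, fun R S _ => Or.inr ⟨∅, by simp, by simp [isNClique_iff]⟩⟩
    | succ b ihb =>
      obtain ⟨M1, h1⟩ := iha (b + 1)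
      obtain ⟨M2, h2⟩ := ihb
      refine ⟨M1 + M2 + 1, fun R S hS => ?_⟩
      obtain ⟨x, hx⟩ : S.Nonempty := Finset.card_pos.1 (by omega)
      have hc := Finset.card_filter_add_card_filter_not (s := S.erase x) (fun y => R.Adj x y)
      have hc2 := Finset.card_erase_of_mem hx
      by_cases hM : M1 ≤ ((S.erase x).filter (fun y => R.Adj x y)).card
      · rcases h1 R _ hM with ⟨T, hT, hcl⟩ | ⟨T, hT, hcl⟩
        · refine Or.inl ⟨insert x T, ?_, hcl.insert fun y hy => (Finset.mem_filter.1 (hT hy)).2⟩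
          intro y hy
          rcases Finset.mem_insert.1 hy with rfl | hy
          · exact hx
          · exact Finset.mem_of_mem_erase (Finset.mem_filter.1 (hT hy)).1
        · exact Or.inr ⟨T, fun y hy =>
            Finset.mem_of_mem_erase (Finset.mem_filter.1 (hT hy)).1, hcl⟩
      · rcases h2 R ((S.erase x).filter (fun y => ¬ R.Adj x y)) (by omega) with
          ⟨T, hT, hcl⟩ | ⟨T, hT, hcl⟩
        · exact Or.inl ⟨T, fun y hy =>
            Finset.mem_of_mem_erase (Finset.mem_filter.1 (hT hy)).1, hcl⟩
        · refine Or.inr ⟨insert x T, ?_, hcl.insert fun y hy => ?_⟩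
          · intro y hy
            rcases Finset.mem_insert.1 hy with rfl | hy
            · exact hx
            · exact Finset.mem_of_mem_erase (Finset.mem_filter.1 (hT hy)).1
          · have := Finset.mem_filter.1 (hT hy)
            exact (compl_adj _ _ _).2 ⟨(Finset.ne_of_mem_erase this.1).symm, this.2⟩

/-- `n` disjoint copies of `K_t` in `B` with all vertices inside `S`. -/
def Pack {V : Type} (B : SimpleGraph V) (t n : ℕ) (S : Finset V) : Prop :=
  ∃ f : Fin n × Fin t → V, Function.Injective f ∧ (∀ p, f p ∈ S) ∧
    ∀ p q, p ≠ q → p.1 = q.1 → B.Adj (f p) (f q)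

theorem pack_succ {V : Type} [DecidableEq V] {B : SimpleGraph V} {t n : ℕ} {S T : Finset V}
    (hT : B.IsNClique t T) (hTS : T ⊆ S) (h : Pack B t n (S \ T)) : Pack B t (n + 1) S := by
  obtain ⟨f, hf, hS, hadj⟩ := h
  have e : Fin t ≃ T := (T.equivFinOfCardEq hT.2).symm
  refine ⟨fun p => Fin.cases (motive := fun _ => V) ((e p.2 : V)) (fun i => f (i, p.2)) p.1,
    ?_, ?_, ?_⟩
  · rintro ⟨i, a⟩ ⟨j, b⟩ h
    induction i using Fin.cases with
    | zero =>
      induction j using Fin.cases with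
      | zero => simpa using h
      | succ j =>
        simp only [Fin.cases_zero, Fin.cases_succ] at h
        exact absurd (e a).2 (h ▸ (Finset.mem_sdiff.1 (hS (j, b))).2)
    | succ i =>
      induction j using Fin.cases with
      | zero =>
        simp only [Fin.cases_zero, Fin.cases_succ] at h
        exact absurd (e b).2 (h ▸ (Finset.mem_sdiff.1 (hS (i, a))).2)
      | succ j =>
        simp only [Fin.cases_succ] at h
        have := hf h
        simp_all
  · rintro ⟨i, a⟩
    induction i using Fin.cases with
    | zero => exact hTS (e a).2
    | succ i => exact (Finset.mem_sdiff.1 (hS (i, a))).1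
  · rintro ⟨i, a⟩ ⟨j, b⟩ hne hij
    simp only at hij
    subst hij
    induction i using Fin.cases with
    | zero =>
      refine hT.1 (e a).2 (e b).2 fun h => hne ?_
      have := e.injective (Subtype.ext h)
      simp [this]
    | succ i =>
      refine hadj (i, a) (i, b) (fun h => hne ?_) rfl
      simp_all

theorem Pack.mono {V : Type} {B : SimpleGraph V} {t n : ℕ} {S S' : Finset V}
    (h : Pack B t n S) (hS : S ⊆ S') : Pack B t n S' := by
  obtain ⟨f, hf, h1, h2⟩ := h
  exact ⟨f, hf, fun p => hS (h1 p), h2⟩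

theorem pack_greedy {V : Type} [DecidableEq V] {B : SimpleGraph V} {t M : ℕ} (n : ℕ)
    (S : Finset V)
    (h : ∀ S' ⊆ S, M ≤ S'.card → ∃ T ⊆ S', B.IsNClique t T) (hS : t * n + M ≤ S.card + t) :
    Pack B t n S := by
  induction n generalizing S with
  | zero => exact ⟨fun p => p.1.elim0, fun p => p.1.elim0, fun p => p.1.elim0, fun p => p.1.elim0⟩
  | succ n ih =>
    have h0 : 0 ≤ t * n := Nat.zero_le _
    rw [mul_add, mul_one] at hS
    obtain ⟨T, hTS, hT⟩ := h S subset_rfl (by omega)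
    refine pack_succ hT hTS (ih _ (fun S' hS' => h S' (hS'.trans Finset.sdiff_subset)) ?_)
    rw [Finset.card_sdiff_of_subset hTS, hT.2]
    have := Finset.card_le_card hTS
    rw [hT.2] at this
    omega

theorem pack_clique {V : Type} [DecidableEq V] {B : SimpleGraph V} {t : ℕ} (n : ℕ)
    (S : Finset V) (h : B.IsClique S) (hS : t * n ≤ S.card) : Pack B t n S := by
  refine pack_greedy (M := t) n S (fun S' hS' hc => ?_) (by omega)
  obtain ⟨T, hT, hTc⟩ := Finset.exists_subset_card_eq hc
  exact ⟨T, hT, h.subset (by exact_mod_cast hT.trans hS'), hTc⟩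

theorem core (k t M n : ℕ) (hk : 2 ≤ k) (ht : 2 ≤ t)
    (hM : ∀ {V : Type} (R : SimpleGraph V) (S : Finset V),
      M ≤ S.card → (∃ T ⊆ S, R.IsNClique (k + 1) T) ∨ (∃ T ⊆ S, Rᶜ.IsNClique t T))
    (hn : 3 * k * M + 1 ≤ n)
    {V : Type} [Fintype V] [DecidableEq V] (hV : Fintype.card V = k * t * n)
    (R : SimpleGraph V) [DecidableRel R.Adj]
    (A Bl : Finset V) (hAB : Disjoint A Bl) (hcard : (k - 1) * t * n + t ≤ A.card + Bl.card)
    (h1 : R.CliqueFree (k + 1)) (h2 : ∀ T ⊆ A, ¬ R.IsNClique k T)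
    (h3 : ∀ x, ¬ Pack Rᶜ t n (Finset.univ.filter (fun y => Rᶜ.Adj x y)))
    (h4 : ∀ U ⊆ Bl, U.card = t → Rᶜ.IsClique U → ∀ x ∈ U,
      ¬ Pack Rᶜ t (n - 1) ((Finset.univ.filter (fun y => Rᶜ.Adj x y)) \ U)) : False := by
  obtain ⟨j, rfl⟩ : ∃ j, k = j + 2 := ⟨k - 2, by omega⟩
  obtain ⟨q, hq⟩ : ∃ q, q = t * n := ⟨_, rfl⟩
  have hVq : Fintype.card V = (j + 2) * q := by rw [hV, hq, mul_assoc]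
  have hqt : q = t * (n - 1) + t := by
    obtain ⟨n', rfl⟩ : ∃ n', n = n' + 1 := ⟨n - 1, by omega⟩
    simp [hq, mul_add]
  have hqM : 2 * (3 * (j + 2) * M) ≤ q - t := by
    have : 2 * (3 * (j + 2) * M) ≤ t * (n - 1) := Nat.mul_le_mul ht (by omega)
    omega
  have hcard' : (j + 1) * q + t ≤ A.card + Bl.card := by
    rw [hq, ← mul_assoc]; simpa using hcard
  -- blue degrees
  have hblue : ∀ x, (Finset.univ.filter (fun y => Rᶜ.Adj x y)).card + t < q + M := by
    intro x
    by_contra hcon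
    refine h3 x (pack_greedy (M := M) n _ (fun S' _ hc => ?_) (by omega))
    rcases hM R S' hc with ⟨T, _, hT⟩ | h
    · exact absurd hT (h1 T)
    · exact h
  have hdeg : ∀ x, (j + 1) * q - M ≤ R.degree x := by
    intro x
    have e := R.degree_compl x
    have e2 : Rᶜ.degree x = (Finset.univ.filter (fun y => Rᶜ.Adj x y)).card := by
      rw [← card_neighborFinset_eq_degree, neighborFinset_eq_filter]
    have e3 := hblue x
    have e4 := R.degree_lt_card_verts x
    rw [hVq] at e e4
    have : (j + 2) * q = (j + 1) * q + q := by ring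
    omega
  have hqpos : 0 < q := by omega
  have : Nonempty V := Fintype.card_pos_iff.1 (by rw [hVq]; positivity)
  have hmin : (j + 1) * q - M ≤ R.minDegree := R.le_minDegree_of_forall_le_degree _ hdeg
  have hMq : 3 * (j + 2) * M < q := by omega
  have hcol : R.Colorable (j + 2) := by
    refine colorable_of_cliqueFree_lt_minDegree h1 (lt_of_lt_of_le ?_ hmin)
    rw [hVq]
    have e1 : 3 * (j + 2) - 4 = 3 * j + 2 := by omega
    have e2 : 3 * (j + 2) - 1 = 3 * j + 5 := by omega
    rw [e1, e2]
    apply Nat.div_lt_of_lt_mul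
    have : M ≤ (j + 1) * q := by nlinarith
    obtain ⟨d, hd⟩ := Nat.exists_eq_add_of_le this
    rw [hd, Nat.add_sub_cancel_left]
    nlinarith
  obtain ⟨C⟩ := hcol
  let P : Fin (j + 2) → Finset V := fun i => Finset.univ.filter (fun x => C x = i)
  have hP : ∀ i x, x ∈ P i ↔ C x = i := by intro i x; simp [P]
  have hPadj : ∀ x y, x ≠ y → C x = C y → Rᶜ.Adj x y := by
    intro x y hne hc
    exact (compl_adj _ _ _).2 ⟨hne, fun h => C.valid h hc⟩
  have hPcl : ∀ i, Rᶜ.IsClique (P i : Set V) := by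
    intro i x hx y hy hne
    exact hPadj x y hne (((hP i x).1 hx).trans ((hP i y).1 hy).symm)
  have hPle : ∀ i, (P i).card ≤ q := by
    intro i
    by_contra hcon
    obtain ⟨x, hx⟩ : (P i).Nonempty := Finset.card_pos.1 (by omega)
    refine h3 x (Pack.mono (pack_clique n ((P i).erase x) ((hPcl i).subset (by simp)) ?_) ?_)
    · rw [Finset.card_erase_of_mem hx]; omega
    · intro y hy
      rw [Finset.mem_erase] at hy
      simpa using hPcl i hx hy.2 hy.1.symm
  have hsplit : ∀ S : Finset V, S.card = ∑ i, (S ∩ P i).card := by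
    intro S
    rw [Finset.card_eq_sum_card_fiberwise (f := C) (t := Finset.univ) (fun _ _ => by simp)]
    refine Finset.sum_congr rfl fun i _ => congrArg _ ?_
    ext x; simp [hP]
  have hPeq : ∀ i, (P i).card = q := by
    have hs := hsplit Finset.univ
    simp only [Finset.univ_inter, Finset.card_univ, hVq] at hs
    have := (Finset.sum_eq_sum_iff_of_le (s := Finset.univ) (f := fun i => (P i).card)
      (g := fun _ => q) (fun i _ => hPle i)).1 (by simp [← hs])
    intro i
    exact this i (Finset.mem_univ i)
  have hout : ∀ x i, C x ≠ i → ((P i).filter (fun y => ¬ R.Adj x y)).card ≤ M := by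
    intro x i hi
    have hsub : ((P (C x)).erase x) ∪ ((P i).filter (fun y => ¬ R.Adj x y)) ⊆
        Finset.univ.filter (fun y => Rᶜ.Adj x y) := by
      intro y hy
      rw [Finset.mem_filter]
      refine ⟨Finset.mem_univ _, ?_⟩
      rcases Finset.mem_union.1 hy with hy | hy
      · rw [Finset.mem_erase, hP] at hy
        exact hPadj x y hy.1.symm hy.2.symm
      · rw [Finset.mem_filter, hP] at hy
        refine (compl_adj _ _ _).2 ⟨?_, hy.2⟩
        rintro rfl
        exact hi hy.1
    have hdis : Disjoint ((P (C x)).erase x) ((P i).filter (fun y => ¬ R.Adj x y)) := by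
      rw [Finset.disjoint_left]
      intro y hy hy'
      rw [Finset.mem_erase, hP] at hy
      rw [Finset.mem_filter, hP] at hy'
      exact hi (hy.2.symm.trans hy'.1)
    have hle := Finset.card_le_card hsub
    rw [Finset.card_union_of_disjoint hdis, Finset.card_erase_of_mem ((hP _ _).2 rfl), hPeq] at hle
    have := hblue x
    omega
  have hBl : ∀ i, (Bl ∩ P i).card + 1 ≤ t := by
    intro i
    by_contra hcon
    obtain ⟨U, hU, hUc⟩ := Finset.exists_subset_card_eq (show t ≤ (Bl ∩ P i).card by omega)
    have hUP : U ⊆ P i := hU.trans Finset.inter_subset_right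
    obtain ⟨x, hx⟩ : U.Nonempty := Finset.card_pos.1 (by omega)
    refine h4 U (hU.trans Finset.inter_subset_left) hUc
      ((hPcl i).subset (by exact_mod_cast hUP)) x hx
      (Pack.mono (pack_clique (n - 1) (P i \ U) ((hPcl i).subset (by simp)) ?_) ?_)
    · rw [Finset.card_sdiff_of_subset hUP, hPeq, hUc]; omega
    · intro y hy
      rw [Finset.mem_sdiff] at hy
      rw [Finset.mem_sdiff, Finset.mem_filter]
      refine ⟨⟨Finset.mem_univ _, hPcl i (hUP hx) hy.1 ?_⟩, hy.2⟩
      rintro rfl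
      exact hy.2 hx
  let a : Fin (j + 2) → ℕ := fun i => ((A ∪ Bl)ᶜ ∩ P i).card
  have hasum : ∑ i, a i + t ≤ q := by
    have e := hsplit (A ∪ Bl)ᶜ
    rw [Finset.card_compl, Finset.card_union_of_disjoint hAB, hVq] at e
    have : (j + 2) * q = (j + 1) * q + q := by ring
    have e' : ∑ i, a i = (j + 2) * q - (A.card + Bl.card) := e.symm
    have e3 : A.card + Bl.card ≤ (j + 2) * q := by
      rw [← Finset.card_union_of_disjoint hAB, ← hVq]; exact Finset.card_le_univ _
    omega
  have hA : ∀ i, q + 1 ≤ (A ∩ P i).card + a i + t := by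
    intro i
    have hsub : P i ⊆ (A ∩ P i) ∪ ((Bl ∩ P i) ∪ ((A ∪ Bl)ᶜ ∩ P i)) := by
      intro x hx
      simp only [Finset.mem_union, Finset.mem_inter, Finset.mem_compl]
      tauto
    have e1 := Finset.card_le_card hsub
    have e2 := Finset.card_union_le (A ∩ P i) ((Bl ∩ P i) ∪ ((A ∪ Bl)ᶜ ∩ P i))
    have e3 := Finset.card_union_le (Bl ∩ P i) ((A ∪ Bl)ᶜ ∩ P i)
    have e4 := hBl i
    have e5 := hPeq i
    have e6 : a i = ((A ∪ Bl)ᶜ ∩ P i).card := rfl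
    omega
  obtain ⟨i0, -, hi0⟩ := Finset.exists_max_image Finset.univ a ⟨0, Finset.mem_univ _⟩
  have hai : ∀ i, i ≠ i0 → 2 * a i + t ≤ q := by
    intro i hi
    have e1 : ∑ l ∈ {i, i0}, a l ≤ ∑ l, a l :=
      Finset.sum_le_sum_of_subset (Finset.subset_univ _)
    rw [Finset.sum_pair hi] at e1
    have := hi0 i (Finset.mem_univ _)
    omega
  have hgreedy : ∀ I : Finset (Fin (j + 2)), i0 ∉ I →
      ∃ T ⊆ A, R.IsNClique (I.card + 1) T ∧ ∀ x ∈ T, C x ∈ insert i0 I := by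
    intro I
    induction I using Finset.induction_on with
    | empty =>
      intro _
      have e1 := hA i0
      have e2 : a i0 ≤ ∑ i, a i := Finset.single_le_sum (fun _ _ => Nat.zero_le _)
        (Finset.mem_univ i0)
      obtain ⟨x, hx⟩ : (A ∩ P i0).Nonempty := Finset.card_pos.1 (by omega)
      rw [Finset.mem_inter, hP] at hx
      exact ⟨{x}, by simpa using hx.1, by simp [isNClique_iff], by simpa using hx.2⟩
    | insert l I hl ih =>
      intro hi
      rw [Finset.mem_insert, not_or] at hi
      obtain ⟨T, hTA, hT, hTC⟩ := ih hi.2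
      have e1 := hA l
      have e2 := hai l (Ne.symm hi.1)
      have hTc : T.card ≤ j + 2 := by
        rw [hT.2]
        have : (insert l I).card ≤ j + 2 := by
          simpa using Finset.card_le_univ (insert l I)
        rwa [Finset.card_insert_of_notMem hl] at this
      have hbi : (T.biUnion fun x => (P l).filter (fun y => ¬ R.Adj x y)).card ≤ T.card * M := by
        refine Finset.card_biUnion_le_card_mul _ _ _ fun x hx => hout x l ?_
        intro h
        have := hTC x hx
        rw [h, Finset.mem_insert] at this
        exact this.elim (fun h => hi.1 h.symm) hl
      have hle : T.card * M ≤ (j + 2) * M := Nat.mul_le_mul_right _ hTc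
      have e3 : 3 * (j + 2) * M = 3 * ((j + 2) * M) := by ring
      obtain ⟨y, hy, hy'⟩ := Finset.exists_mem_notMem_of_card_lt_card
        (show (T.biUnion fun x => (P l).filter (fun y => ¬ R.Adj x y)).card < (A ∩ P l).card by
          omega)
      rw [Finset.mem_inter] at hy
      refine ⟨insert y T, Finset.insert_subset hy.1 hTA, ?_, ?_⟩
      · rw [Finset.card_insert_of_notMem hl]
        refine hT.insert fun x hx => ?_
        by_contra hcon
        exact hy' (Finset.mem_biUnion.2 ⟨x, hx, Finset.mem_filter.2
          ⟨hy.2, fun h => hcon h.symm⟩⟩)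
      · intro x hx
        rcases Finset.mem_insert.1 hx with rfl | hx
        · rw [(hP _ _).1 hy.2]; simp
        · have := hTC x hx
          simp only [Finset.mem_insert] at this ⊢
          tauto
  obtain ⟨T, hTA, hT, -⟩ := hgreedy (Finset.univ.erase i0) (by simp)
  refine h2 T hTA ?_
  rwa [Finset.card_erase_of_mem (Finset.mem_univ _), Finset.card_univ, Fintype.card_fin] at hT

theorem fan_of_pack {V : Type} {B : SimpleGraph V} {t n : ℕ} {S : Finset V} (c : V)
    (hc : ∀ x ∈ S, B.Adj c x) (h : Pack B t n S) : containsCopy B (genFan n t) := by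
  obtain ⟨f, hf, hS, hadj⟩ := h
  refine ⟨⟨fun o => o.elim c f, ?_⟩, ?_⟩
  · intro a b hab
    rw [genFan, fromRel_adj] at hab
    obtain ⟨hne, hab⟩ := hab
    cases a with
    | none =>
      cases b with
      | none => exact absurd rfl hne
      | some b => exact hc _ (hS b)
    | some a =>
      cases b with
      | none => exact (hc _ (hS a)).symm
      | some b =>
        refine hadj a b (fun h => hne (by rw [h])) ?_
        simp only [reduceCtorEq, Option.some.injEq, false_or] at hab
        rcases hab with ⟨p, q, rfl, rfl, h⟩ | ⟨p, q, rfl, rfl, h⟩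
        · exact h
        · exact h.symm
  · intro a b hab
    cases a with
    | none =>
      cases b with
      | none => rfl
      | some b => exact absurd hab (hc _ (hS b)).ne
    | some a =>
      cases b with
      | none => exact absurd hab (hc _ (hS a)).ne'
      | some b => exact congrArg some (hf hab)

theorem pack_map {V W : Type} {B : SimpleGraph V} {B' : SimpleGraph W} {t n : ℕ} {S : Finset V}
    (g : V ↪ W) (hg : ∀ x y, B.Adj x y → B'.Adj (g x) (g y)) (h : Pack B t n S) :
    Pack B' t n (S.map g) := by
  obtain ⟨f, hf, hS, hadj⟩ := h
  exact ⟨g ∘ f, g.injective.comp hf, fun p => Finset.mem_map_of_mem _ (hS p),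
    fun p q h1 h2 => hg _ _ (hadj p q h1 h2)⟩

theorem containsCopy_of_not_cliqueFree {V : Type} {R : SimpleGraph V} {n : ℕ}
    (h : ¬ R.CliqueFree n) : containsCopy R (completeGraph (Fin n)) :=
  ⟨(topEmbeddingOfNotCliqueFree h).toHom, (topEmbeddingOfNotCliqueFree h).injective⟩

theorem KstarK_some {m l : ℕ} (i j : Fin m) : (KstarK m l).Adj (some i) (some j) ↔ i ≠ j := by
  simp [KstarK, fromRel_adj]

theorem KstarK_none {m l : ℕ} (j : Fin m) : (KstarK m l).Adj none (some j) ↔ (j : ℕ) < l := by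
  simp [KstarK, fromRel_adj]

theorem star_upper (k t : ℕ) (hk : 2 ≤ k) (ht : 2 ≤ t) : ∃ n₀ : ℕ, ∀ n, n₀ ≤ n →
    starArrows (k * t * n) ((k - 1) * t * n + t) (completeGraph (Fin (k + 1))) (genFan n t) := by
  classical
  obtain ⟨M, hM⟩ := ramsey_fin (k + 1) t
  refine ⟨3 * k * M + 1, fun n hn => ?_⟩
  obtain ⟨m, hm⟩ : ∃ m, m = k * t * n := ⟨_, rfl⟩
  obtain ⟨l, hl⟩ : ∃ l, l = (k - 1) * t * n + t := ⟨_, rfl⟩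
  rw [← hm, ← hl]
  intro R hR
  by_contra hcon
  rw [not_or] at hcon
  obtain ⟨hred, hbl⟩ := hcon
  have hRfree : R.CliqueFree (k + 1) := by
    by_contra h
    exact hred (containsCopy_of_not_cliqueFree h)
  have hlm : l ≤ m := by
    obtain ⟨j, rfl⟩ : ∃ j, k = j + 1 := ⟨k - 1, by omega⟩
    obtain ⟨n', rfl⟩ : ∃ n', n = n' + 1 := ⟨n - 1, by omega⟩
    simp only [hl, hm, Nat.add_sub_cancel]
    nlinarith [Nat.zero_le (t * n')]
  let s : Fin m ↪ Option (Fin m) := Function.Embedding.some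
  have hs : ∀ x, s x = some x := fun _ => rfl
  let RR : SimpleGraph (Fin m) := R.comap s
  set B := KstarK m l \ R with hB
  have hBs : ∀ x y, RRᶜ.Adj x y → B.Adj (s x) (s y) := by
    intro x y h
    rw [compl_adj] at h
    rw [hB, sdiff_adj]
    exact ⟨(KstarK_some x y).2 h.1, h.2⟩
  refine core k t M n hk ht hM hn (V := Fin m) (by simp [hm]) RR
    (Finset.univ.filter (fun i => R.Adj none (s i)))
    (Finset.univ.filter (fun i => (i : ℕ) < l ∧ ¬ R.Adj none (s i))) ?_ ?_ ?_ ?_ ?_ ?_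
  · rw [Finset.disjoint_left]
    intro x hx hx'
    exact (Finset.mem_filter.1 hx').2.2 (Finset.mem_filter.1 hx).2
  · refine le_trans ?_ (Finset.card_union_le _ _)
    have hinj : Function.Injective (Fin.castLE hlm) := Fin.castLE_injective hlm
    have hc : ((Finset.univ : Finset (Fin l)).map ⟨_, hinj⟩).card = l := by simp
    rw [← hl]
    conv_lhs => rw [← hc]
    apply Finset.card_le_card
    intro x hx
    simp only [Finset.mem_map, Finset.mem_univ, true_and, Function.Embedding.coeFn_mk] at hx
    obtain ⟨y, rfl⟩ := hx
    by_cases h : R.Adj none (s (Fin.castLE hlm y))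
    · exact Finset.mem_union_left _ (by simpa using h)
    · refine Finset.mem_union_right _ ?_
      rw [Finset.mem_filter]
      exact ⟨Finset.mem_univ _, y.2, h⟩
  · intro T hT
    refine hRfree (T.map s) ⟨?_, by rw [Finset.card_map]; exact hT.2⟩
    intro x hx y hy hne
    simp only [Finset.coe_map, Set.mem_image] at hx hy
    obtain ⟨x, hx, rfl⟩ := hx
    obtain ⟨y, hy, rfl⟩ := hy
    exact hT.1 hx hy (fun h => hne (by rw [h]))
  · intro T hTA hT
    have hcl : R.IsNClique k (T.map s) := by
      refine ⟨?_, by rw [Finset.card_map]; exact hT.2⟩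
      intro x hx y hy hne
      simp only [Finset.coe_map, Set.mem_image] at hx hy
      obtain ⟨x, hx, rfl⟩ := hx
      obtain ⟨y, hy, rfl⟩ := hy
      exact hT.1 hx hy (fun h => hne (by rw [h]))
    refine hRfree _ (hcl.insert (a := none) fun b hb => ?_)
    obtain ⟨y, hy, rfl⟩ := Finset.mem_map.1 hb
    exact (Finset.mem_filter.1 (hTA hy)).2
  · intro x hp
    refine hbl (fan_of_pack (s x) ?_ (pack_map s hBs hp))
    intro b hb
    obtain ⟨y, hy, rfl⟩ := Finset.mem_map.1 hb
    exact hBs _ _ (Finset.mem_filter.1 hy).2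
  · intro U hU hUc hUcl x hx hp
    have hBn : ∀ y ∈ U, B.Adj none (s y) := by
      intro y hy
      have := (Finset.mem_filter.1 (hU hy)).2
      rw [hB, sdiff_adj]
      exact ⟨(KstarK_none y).2 this.1, this.2⟩
    have hT : B.IsNClique t (insert none ((U.erase x).map s)) := by
      have h0 : B.IsNClique (t - 1) ((U.erase x).map s) := by
        refine ⟨?_, by rw [Finset.card_map, Finset.card_erase_of_mem hx, hUc]⟩
        intro y hy z hz hne
        simp only [Finset.coe_map, Set.mem_image] at hy hz
        obtain ⟨y, hy, rfl⟩ := hy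
        obtain ⟨z, hz, rfl⟩ := hz
        exact hBs _ _ (hUcl (Finset.mem_of_mem_erase hy) (Finset.mem_of_mem_erase hz)
          (fun h => hne (by rw [h])))
      have := h0.insert (a := none) fun b hb => by
        obtain ⟨y, hy, rfl⟩ := Finset.mem_map.1 hb
        exact hBn y (Finset.mem_of_mem_erase hy)
      rwa [Nat.sub_add_cancel (by omega)] at this
    have hp' := pack_map s hBs hp
    have hp2 : Pack B t (n - 1 + 1)
        (insert none ((Finset.univ.filter (fun y => RRᶜ.Adj x y)).map s)) := by
      refine pack_succ hT ?_ (hp'.mono ?_)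
      · apply Finset.insert_subset_insert
        apply Finset.map_subset_map.2
        intro y hy
        rw [Finset.mem_erase] at hy
        exact Finset.mem_filter.2 ⟨Finset.mem_univ _, hUcl hx hy.2 hy.1.symm⟩
      · intro b hb
        obtain ⟨y, hy, rfl⟩ := Finset.mem_map.1 hb
        rw [Finset.mem_sdiff] at hy
        rw [Finset.mem_sdiff]
        refine ⟨Finset.mem_insert_of_mem (Finset.mem_map_of_mem _ hy.1), fun h => ?_⟩
        rcases Finset.mem_insert.1 h with h | h
        · simp [hs] at h
        · obtain ⟨z, hz, hzy⟩ := Finset.mem_map.1 h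
          rw [s.injective hzy] at hz
          exact hy.2 (Finset.mem_of_mem_erase hz)
    rw [Nat.sub_add_cancel (by omega)] at hp2
    refine hbl (fan_of_pack (s x) ?_ hp2)
    intro b hb
    rcases Finset.mem_insert.1 hb with rfl | hb
    · exact (hBn x hx).symm
    · obtain ⟨y, hy, rfl⟩ := Finset.mem_map.1 hb
      exact hBs _ _ (Finset.mem_filter.1 hy).2

theorem arrows_of_star {V W : Type} {m l : ℕ} {G : SimpleGraph V} {H : SimpleGraph W}
    (h : starArrows m l G H) : arrows (m + 1) G H := by
  intro R
  let e : Option (Fin m) ≃ Fin (m + 1) := finSuccEquivLast.symm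
  rcases h (R.comap e ⊓ KstarK m l) inf_le_right with ⟨f, hf⟩ | ⟨f, hf⟩
  · exact Or.inl ⟨⟨fun x => e (f x), fun hab => (f.map_adj hab).1⟩, e.injective.comp hf⟩
  · refine Or.inr ⟨⟨fun x => e (f x), fun hab => ?_⟩, e.injective.comp hf⟩
    have := f.map_adj hab
    rw [sdiff_adj] at this
    exact (compl_adj _ _ _).2 ⟨fun h => this.1.ne (e.injective h), fun h => this.2 ⟨h, this.1⟩⟩

theorem class_small {W : Type} [Fintype W] {q c : ℕ} (hq : 0 < q) (hW : Fintype.card W = q + 1)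
    (g : W → ℕ) (hg : Function.Injective g) (hc : ∀ w, g w / q = c) : False := by
  have h1 : (Finset.univ.map ⟨g, hg⟩) ⊆ Finset.Ico (q * c) (q * c + q) := by
    intro x hx
    simp only [Finset.mem_map, Finset.mem_univ, true_and, Function.Embedding.coeFn_mk] at hx
    obtain ⟨w, rfl⟩ := hx
    have h2 := Nat.div_add_mod (g w) q
    have h3 := Nat.mod_lt (g w) hq
    rw [hc w] at h2
    rw [Finset.mem_Ico]
    omega
  have := Finset.card_le_card h1
  rw [Finset.card_map, Finset.card_univ, hW, Nat.card_Ico] at this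
  omega

theorem genFan_none {n t : ℕ} (p : Fin n × Fin t) : (genFan n t).Adj none (some p) := by
  simp [genFan, fromRel_adj]

theorem genFan_some {n t : ℕ} (i : Fin n) {a b : Fin t} (h : a ≠ b) :
    (genFan n t).Adj (some (i, a)) (some (i, b)) := by
  simp [genFan, fromRel_adj, h]

theorem not_clique_of_color {V : Type} {R : SimpleGraph V} {k : ℕ} (col : V → ℕ)
    (hcol : ∀ x, col x < k) (hR : ∀ x y, R.Adj x y → col x ≠ col y) :
    ¬ containsCopy R (completeGraph (Fin (k + 1))) := by
  rintro ⟨f, hf⟩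
  have hinj : Function.Injective (fun x : Fin (k + 1) => (⟨col (f x), hcol _⟩ : Fin k)) := by
    intro x y h
    by_contra hne
    refine hR _ _ (f.map_adj (show (completeGraph (Fin (k + 1))).Adj x y from hne)) ?_
    simpa using h
  have := Fintype.card_le_of_injective _ hinj
  simp at this

theorem not_arrows (k t n N : ℕ) (hq : 0 < t * n) (hN : N ≤ k * t * n) :
    ¬ arrows N (completeGraph (Fin (k + 1))) (genFan n t) := by
  intro h
  let R : SimpleGraph (Fin N) :=
    { Adj := fun x y => (x : ℕ) / (t * n) ≠ (y : ℕ) / (t * n)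
      symm := ⟨fun _ _ h => h.symm⟩
      loopless := ⟨fun _ h => h rfl⟩ }
  rcases h R with h | ⟨f, hf⟩
  · refine not_clique_of_color (fun x : Fin N => (x : ℕ) / (t * n)) (fun x => ?_)
      (fun x y h => h) h
    rw [Nat.div_lt_iff_lt_mul hq]
    have := x.2
    rw [← mul_assoc]; omega
  · refine class_small (W := Option (Fin n × Fin t)) (c := (f none : ℕ) / (t * n)) hq
      (by simp [mul_comm]) (fun w => (f w : ℕ)) (fun a b h => hf (Fin.ext h)) ?_
    intro w
    cases w with
    | none => rfl
    | some p =>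
      have := f.map_adj (genFan_none p)
      rw [compl_adj] at this
      exact (not_not.1 this.2).symm

theorem not_starArrows (k t n l : ℕ) (hk : 2 ≤ k) (ht : 2 ≤ t) (hn : 0 < n)
    (hl : l < (k - 1) * t * n + t) :
    ¬ starArrows (k * t * n) l (completeGraph (Fin (k + 1))) (genFan n t) := by
  intro h
  have hq : 0 < t * n := by positivity
  let col : Option (Fin (k * t * n)) → ℕ := fun o => o.elim (k - 1) (fun i => (i : ℕ) / (t * n))
  let R : SimpleGraph (Option (Fin (k * t * n))) :=
    { Adj := fun x y => (KstarK (k * t * n) l).Adj x y ∧ col x ≠ col y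
      symm := ⟨fun _ _ h => ⟨h.1.symm, h.2.symm⟩⟩
      loopless := ⟨fun _ h => h.2 rfl⟩ }
  rcases h R (fun x y (h : R.Adj x y) => h.1) with h | ⟨f, hf⟩
  · refine not_clique_of_color col (fun x => ?_) (fun x y (h : R.Adj x y) => h.2) h
    cases x with
    | none => change k - 1 < k; omega
    | some x =>
      change (x : ℕ) / (t * n) < k
      rw [Nat.div_lt_iff_lt_mul hq]
      have := x.2
      rw [← mul_assoc]; omega
  · have hadj : ∀ a b, (genFan n t).Adj a b →
        (KstarK (k * t * n) l).Adj (f a) (f b) ∧ col (f a) = col (f b) := by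
      intro a b hab
      have := f.map_adj hab
      rw [sdiff_adj] at this
      refine ⟨this.1, ?_⟩
      by_contra hne
      exact this.2 ⟨this.1, hne⟩
    by_cases hnone : ∃ w, f w = none
    · obtain ⟨w, hw⟩ := hnone
      obtain ⟨g, hg, hgw⟩ : ∃ g : Fin t → Option (Fin n × Fin t), Function.Injective g ∧
          ∀ a, (genFan n t).Adj w (g a) := by
        cases w with
        | none =>
          exact ⟨fun a => some (⟨0, hn⟩, a), fun a b h => by simpa using h,
            fun a => genFan_none _⟩
        | some p =>
          obtain ⟨i, a⟩ := p
          refine ⟨fun b => if b = a then none else some (i, b), ?_, ?_⟩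
          · intro b c hbc
            by_cases hb : b = a <;> by_cases hc : c = a <;> simp_all
          · intro b
            by_cases hb : b = a
            · simpa [hb] using (genFan_none (i, a)).symm
            · simpa [hb] using genFan_some i (Ne.symm hb)
      have hval : ∀ a, ∃ y : Fin (k * t * n), f (g a) = some y ∧ (y : ℕ) < l ∧
          (k - 1) * t * n ≤ y := by
        intro a
        have h1 := hadj _ _ (hgw a)
        rw [hw] at h1
        cases hy : f (g a) with
        | none => rw [hy] at h1; exact absurd rfl h1.1.ne
        | some y =>
          rw [hy, KstarK_none] at h1
          refine ⟨y, rfl, h1.1, ?_⟩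
          have h2 : k - 1 = (y : ℕ) / (t * n) := h1.2
          rw [mul_assoc, h2]
          exact Nat.div_mul_le_self _ _
      choose y hy1 hy2 hy3 using hval
      have hyinj : Function.Injective (fun a => (y a : ℕ)) := by
        intro a b hab
        have : y a = y b := Fin.ext hab
        exact hg (hf (by rw [hy1, hy1, this]))
      have hsub : Finset.univ.map ⟨_, hyinj⟩ ⊆ Finset.Ico ((k - 1) * t * n) l := by
        intro x hx
        simp only [Finset.mem_map, Finset.mem_univ, true_and, Function.Embedding.coeFn_mk] at hx
        obtain ⟨a, rfl⟩ := hx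
        exact Finset.mem_Ico.2 ⟨hy3 a, hy2 a⟩
      have := Finset.card_le_card hsub
      rw [Finset.card_map, Finset.card_univ, Fintype.card_fin, Nat.card_Ico] at this
      omega
    · push Not at hnone
      choose y hy using fun w => Option.ne_none_iff_exists'.1 (hnone w)
      refine class_small (W := Option (Fin n × Fin t)) (c := (y none : ℕ) / (t * n)) hq
        (by simp [mul_comm]) (fun w => (y w : ℕ)) ?_ ?_
      · intro a b h
        have : y a = y b := Fin.ext h
        exact hf (by rw [hy, hy, this])
      · intro w
        cases w with
        | none => rfl
        | some p =>
          have := (hadj _ _ (genFan_none p)).2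
          rw [hy, hy] at this
          exact this.symm

end helpers

theorem statement_16 (k t : ℕ) (hk : 2 ≤ k) (ht : 2 ≤ t) :
    ∃ n₀ : ℕ, ∀ n : ℕ, n₀ ≤ n →
      starRamsey (completeGraph (Fin (k + 1))) (genFan n t) = (k - 1) * t * n + t := by
  obtain ⟨n₀, h⟩ := star_upper k t hk ht
  refine ⟨n₀ + 1, fun n hn => ?_⟩
  have hup := h n (by omega)
  have hq : 0 < t * n := Nat.mul_pos (by omega) (by omega)
  have hram : ramseyNumber (completeGraph (Fin (k + 1))) (genFan n t) = k * t * n + 1 := by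
    have hmem : k * t * n + 1 ∈
        { N : ℕ | 0 < N ∧ arrows N (completeGraph (Fin (k + 1))) (genFan n t) } :=
      ⟨Nat.succ_pos _, arrows_of_star hup⟩
    refine le_antisymm (Nat.sInf_le hmem) ?_
    by_contra hcon
    exact not_arrows k t n _ hq (by unfold ramseyNumber at hcon; omega)
      (Nat.sInf_mem ⟨_, hmem⟩).2
  unfold starRamsey
  rw [hram, Nat.add_sub_cancel]
  refine le_antisymm (Nat.sInf_le hup) ?_
  by_contra hcon
  exact not_starArrows k t n _ hk ht (by omega) (not_le.1 hcon)
    (Nat.sInf_mem (s := { l : ℕ | starArrows (k * t * n) l (completeGraph (Fin (k + 1)))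
      (genFan n t) }) ⟨_, hup⟩)
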